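/- Let a₀, …, a₇ be the vertices of the unit cube [0,1]³ ⊂ ℝ³ (a_k has coordinates the binary digits of k) and let b = (1/2, 1/2, 1/2) be the center of the cube. Then the twelve tetrahedra conv{b,a₀,a₁,a₃}, conv{b,a₀,a₂,a₃}, conv{b,a₀,a₁,a₄}, conv{b,a₀,a₂,a₄}, conv{b,a₁,a₃,a₅}, conv{b,a₁,a₄,a₅}, conv{b,a₂,a₃,a₆}, conv{b,a₂,a₄,a₆}, conv{b,a₃,a₅,a₇}, conv{b,a₃,a₆,a₇}, conv{b,a₄,a₅,a₇}, conv{b,a₄,a₆,a₇} each have affinely independent vertex sets, their union is [0,1]³, and they have pairwise disjoint interiors. (This is the 'type E' triangulation of the cube: each of the six square faces is split into two triangles and the resulting twelve boundary triangles are coned from the center b.) -/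

import Mathlib

noncomputable section

/-- The point `(a, b, c)` of Euclidean 3-space. -/
def pt3 (a b c : ℝ) : EuclideanSpace ℝ (Fin 3) :=
  (WithLp.equiv 2 (Fin 3 → ℝ)).symm ![a, b, c]

/-- The unit cube `[0,1]³` in Euclidean 3-space. -/
def unitCube : Set (EuclideanSpace ℝ (Fin 3)) :=
  {x | ∀ i : Fin 3, x i ∈ Set.Icc (0 : ℝ) 1}

/-- The vertices `a₀, …, a₇` of the unit cube (`a_k` has coordinates the binary digits
of `k`). -/
def a₀ : EuclideanSpace ℝ (Fin 3) := pt3 0 0 0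
def a₁ : EuclideanSpace ℝ (Fin 3) := pt3 1 0 0
def a₂ : EuclideanSpace ℝ (Fin 3) := pt3 0 1 0
def a₃ : EuclideanSpace ℝ (Fin 3) := pt3 1 1 0
def a₄ : EuclideanSpace ℝ (Fin 3) := pt3 0 0 1
def a₅ : EuclideanSpace ℝ (Fin 3) := pt3 1 0 1
def a₆ : EuclideanSpace ℝ (Fin 3) := pt3 0 1 1
def a₇ : EuclideanSpace ℝ (Fin 3) := pt3 1 1 1

/-- The center `b = (1/2, 1/2, 1/2)` of the unit cube. -/
def bCtr : EuclideanSpace ℝ (Fin 3) := pt3 (1/2) (1/2) (1/2)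

/-- The tetrahedron `conv{p, q, r, s}`. -/
def tet (p q r s : EuclideanSpace ℝ (Fin 3)) : Set (EuclideanSpace ℝ (Fin 3)) :=
  convexHull ℝ {p, q, r, s}

/-- The 'type E' family of twelve tetrahedra: each square face of the cube is split into
two triangles and the twelve boundary triangles are coned from the center `b`. -/
def typeE : Fin 12 → Set (EuclideanSpace ℝ (Fin 3)) :=
  ![tet bCtr a₀ a₁ a₃, tet bCtr a₀ a₂ a₃, tet bCtr a₀ a₁ a₄, tet bCtr a₀ a₂ a₄,
    tet bCtr a₁ a₃ a₅, tet bCtr a₁ a₄ a₅, tet bCtr a₂ a₃ a₆, tet bCtr a₂ a₄ a₆,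
    tet bCtr a₃ a₅ a₇, tet bCtr a₃ a₆ a₇, tet bCtr a₄ a₅ a₇, tet bCtr a₄ a₆ a₇]

end

/-!
The type E triangulation is the Kuhn triangulation of the cube along the diagonal `a₃a₄` with each
of the six tetrahedra bisected at the midpoint `b` of that diagonal. In coordinates `u` along the
edges at `a₃` or at `a₄`, each of the twelve halves is given by inequalities
`0 ≤ u (σ 0) ≤ u (σ 1) ≤ u (σ 2)` and `u (σ 0) + u (σ 2) ≤ 1` for a permutation `σ`; passing from
one corner to the other replaces `u` by `1 - u`. A point of the cube is therefore located by sorting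
its coordinates and comparing the sum of the smallest and the largest with `1`, and strict
inequalities determine `σ` and the corner.
-/

open Set Module

section BarycentricCoordinates

theorem affineIndependent_of_affineSpan_eq_top {k ι V P : Type*} [Fintype ι] [DivisionRing k]
    [AddCommGroup V] [Module k V] [AddTorsor V P] {v : ι → P} (hv : affineSpan k (range v) = ⊤)
    (hcard : Fintype.card ι = finrank k V + 1) : AffineIndependent k v := by
  rw [affineIndependent_iff_finrank_vectorSpan_eq k v hcard,
    AffineSubspace.vectorSpan_eq_top_of_affineSpan_eq_top k V P hv, finrank_top]

variable {k ι E : Type*} [Fintype ι]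

/-- The values `w i x` are barycentric coordinates of each point `x` with respect to the vertices
`v i`, in a vector space regarded as an affine space. -/
def IsBarycentricCoordinates [Ring k] [AddCommGroup E] [Module k E] (v : ι → E) (w : ι → E → k) :
    Prop :=
  ∀ x, ∑ i, w i x = 1 ∧ ∑ i, w i x • v i = x

namespace IsBarycentricCoordinates

section Field

variable [Field k] [AddCommGroup E] [Module k E] {v : ι → E} {w : ι → E → k}

theorem affineCombination_eq (h : IsBarycentricCoordinates v w) (x : E) :
    Finset.univ.affineCombination k v (w · x) = x := by
  rw [Finset.affineCombination_eq_linear_combination _ _ _ (h x).1, (h x).2]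

theorem affineSpan_range_eq_top (h : IsBarycentricCoordinates v w) :
    affineSpan k (range v) = ⊤ := by
  refine eq_top_iff.2 fun x _ => ?_
  rw [← h.affineCombination_eq x]
  exact affineCombination_mem_affineSpan (h x).1 v

theorem exists_affineBasis (h : IsBarycentricCoordinates v w)
    (hcard : Fintype.card ι = finrank k E + 1) :
    ∃ b : AffineBasis ι k E, ⇑b = v ∧ ∀ i x, b.coord i x = w i x := by
  have hv := h.affineSpan_range_eq_top
  refine ⟨⟨v, affineIndependent_of_affineSpan_eq_top hv hcard, hv⟩, rfl, fun i x => ?_⟩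
  conv_lhs => rw [← h.affineCombination_eq x]
  exact AffineBasis.coord_apply_combination_of_mem _ (Finset.mem_univ i) (h x).1

end Field

theorem convexHull_range_eq [AddCommGroup E] [Module ℝ E] {v : ι → E} {w : ι → E → ℝ}
    (h : IsBarycentricCoordinates v w) (hcard : Fintype.card ι = finrank ℝ E + 1) :
    convexHull ℝ (range v) = {x | ∀ i, 0 ≤ w i x} := by
  obtain ⟨b, rfl, hb⟩ := h.exists_affineBasis hcard
  simp only [b.convexHull_eq_nonneg_coord, hb]

theorem interior_convexHull_range_eq [NormedAddCommGroup E] [NormedSpace ℝ E] {v : ι → E}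
    {w : ι → E → ℝ} (h : IsBarycentricCoordinates v w)
    (hcard : Fintype.card ι = finrank ℝ E + 1) :
    interior (convexHull ℝ (range v)) = {x | ∀ i, 0 < w i x} := by
  obtain ⟨b, rfl, hb⟩ := h.exists_affineBasis hcard
  simp only [b.interior_convexHull, hb]

end IsBarycentricCoordinates

end BarycentricCoordinates

section HalfKuhnTuples

variable {n : ℕ}

/-- The tuples `0 ≤ u₀ ≤ ⋯ ≤ uₙ ≤ 1` that lie on the side of the origin of the hyperplane
`u₀ + uₙ = 1` bisecting the Kuhn simplex `0 ≤ u₀ ≤ ⋯ ≤ uₙ ≤ 1`. -/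
def IsHalfKuhn (u : Fin (n + 1) → ℝ) : Prop :=
  Monotone u ∧ 0 ≤ u 0 ∧ u 0 + u (Fin.last n) ≤ 1

/-- The variant of `IsHalfKuhn` with strict inequalities, describing interiors. -/
def IsStrictHalfKuhn (u : Fin (n + 1) → ℝ) : Prop :=
  StrictMono u ∧ 0 < u 0 ∧ u 0 + u (Fin.last n) < 1

theorem isHalfKuhn_fin_three_iff {u : Fin 3 → ℝ} :
    IsHalfKuhn u ↔ 0 ≤ u 0 ∧ u 0 + u 2 ≤ 1 ∧ u 1 ≤ u 2 ∧ u 0 ≤ u 1 := by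
  simp only [IsHalfKuhn, Fin.monotone_iff_le_succ, Fin.forall_fin_two]
  tauto

theorem isStrictHalfKuhn_fin_three_iff {u : Fin 3 → ℝ} :
    IsStrictHalfKuhn u ↔ 0 < u 0 ∧ u 0 + u 2 < 1 ∧ u 1 < u 2 ∧ u 0 < u 1 := by
  simp only [IsStrictHalfKuhn, Fin.strictMono_iff_lt_succ, Fin.forall_fin_two]
  tauto

theorem IsHalfKuhn.mem_Icc {u : Fin (n + 1) → ℝ} (hu : IsHalfKuhn u) (i : Fin (n + 1)) :
    u i ∈ Icc 0 1 := by
  obtain ⟨hmono, hnonneg, hsum⟩ := hu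
  have hfirst : u 0 ≤ u i := hmono (Fin.zero_le i)
  have hlast : u i ≤ u (Fin.last n) := hmono (Fin.le_last i)
  constructor <;> linarith

theorem exists_perm_isHalfKuhn {u : Fin (n + 1) → ℝ} (hu : ∀ i, u i ∈ Icc 0 1) :
    ∃ σ : Equiv.Perm (Fin (n + 1)), IsHalfKuhn (u ∘ σ) ∨ IsHalfKuhn ((1 - u) ∘ σ) := by
  have hmono : Monotone (u ∘ Tuple.sort u) := Tuple.monotone_sort u
  rcases le_total ((u ∘ Tuple.sort u) 0 + (u ∘ Tuple.sort u) (Fin.last n)) 1 with hsum | hsum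
  · exact ⟨Tuple.sort u, .inl ⟨hmono, (hu _).1, hsum⟩⟩
  · refine ⟨Fin.revPerm.trans (Tuple.sort u), .inr ⟨fun i j hij => ?_, ?_, ?_⟩⟩
    · exact sub_le_sub_left (hmono (Fin.rev_le_rev.2 hij)) 1
    · exact sub_nonneg.2 (hu _).2
    · simp only [Function.comp_apply, Equiv.trans_apply, Fin.revPerm_apply, Pi.sub_apply,
        Pi.one_apply, Fin.rev_zero, Fin.rev_last] at hsum ⊢
      linarith

theorem perm_eq_of_strictMono_comp {α : Type*} [PartialOrder α] {u : Fin n → α}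
    {σ τ : Equiv.Perm (Fin n)} (hσ : StrictMono (u ∘ σ)) (hτ : StrictMono (u ∘ τ)) : σ = τ := by
  have hinj : Function.Injective u := (σ.injective_comp u).1 hσ.injective
  exact DFunLike.coe_injective (hinj.comp_left (Tuple.unique_monotone hσ.monotone hτ.monotone))

theorem IsStrictHalfKuhn.not_one_sub {u : Fin (n + 1) → ℝ} {σ τ : Equiv.Perm (Fin (n + 1))}
    (hσ : IsStrictHalfKuhn (u ∘ σ)) : ¬ IsStrictHalfKuhn ((1 - u) ∘ τ) := by
  rintro ⟨hτmono, -, hτsum⟩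
  obtain ⟨hσmono, -, hσsum⟩ := hσ
  have hmax : u (τ 0) ≤ u (σ (Fin.last n)) := by
    simpa using hσmono.monotone (Fin.le_last (σ.symm (τ 0)))
  have hmin : u (τ (Fin.last n)) ≤ u (σ 0) := by
    have h := hτmono.monotone (Fin.le_last (τ.symm (σ 0)))
    simp only [Function.comp_apply, Equiv.apply_symm_apply, Pi.sub_apply, Pi.one_apply] at h
    linarith
  simp only [Function.comp_apply, Pi.sub_apply, Pi.one_apply] at hσsum hτsum
  linarith

end HalfKuhnTuples

section CubeCorners

open scoped symmDiff

variable {ι : Type*} [DecidableEq ι]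

/-- The vertex of the unit cube whose coordinates equal to `1` are those in `J`. -/
noncomputable def cubeVertex (J : Finset ι) : EuclideanSpace ℝ ι :=
  WithLp.toLp 2 fun i => if i ∈ J then 1 else 0

/-- The coordinates along the edges of the unit cube with origin at the corner `cubeVertex A`. -/
def cornerCoord (A : Finset ι) (x : EuclideanSpace ℝ ι) (i : ι) : ℝ :=
  if i ∈ A then 1 - x i else x i

variable (A J : Finset ι) (x : EuclideanSpace ℝ ι) (i : ι)

theorem cornerCoord_injective : Function.Injective (cornerCoord A) := by
  intro x y hxy
  ext i
  have hi := congrFun hxy i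
  by_cases hA : i ∈ A <;> simpa [cornerCoord, hA] using hi

theorem cornerCoord_compl [Fintype ι] : cornerCoord Aᶜ x = 1 - cornerCoord A x := by
  ext i
  by_cases hi : i ∈ A <;> simp [cornerCoord, hi]

theorem cornerCoord_mem_Icc_iff : cornerCoord A x i ∈ Icc 0 1 ↔ x i ∈ Icc 0 1 := by
  by_cases hi : i ∈ A <;> simp [cornerCoord, hi, and_comm]

theorem cornerCoord_cubeVertex_symmDiff :
    cornerCoord A (cubeVertex (A ∆ J)) i = if i ∈ J then 1 else 0 := by
  by_cases hA : i ∈ A <;> by_cases hJ : i ∈ J <;>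
    simp [cornerCoord, cubeVertex, Finset.mem_symmDiff, hA, hJ]

theorem cornerCoord_cubeVertex_self : cornerCoord A (cubeVertex A) i = 0 := by
  by_cases hA : i ∈ A <;> simp [cornerCoord, cubeVertex, hA]

theorem cornerCoord_sum_smul {κ : Type*} [Fintype κ] {w : κ → ℝ} (hw : ∑ k, w k = 1)
    (v : κ → EuclideanSpace ℝ ι) :
    cornerCoord A (∑ k, w k • v k) i = ∑ k, w k * cornerCoord A (v k) i := by
  by_cases hA : i ∈ A <;> simp [cornerCoord, hA, mul_sub, hw]

end CubeCorners

section HalfKuhnTetrahedra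

open scoped symmDiff

variable (A : Finset (Fin 3)) (σ : Equiv.Perm (Fin 3))

/-- The center of the cube followed by the corner `A` and the two vertices reached from it along the
edge in direction `σ 2` and then along the edge in direction `σ 1`. -/
noncomputable def halfKuhnVertex : Fin 4 → EuclideanSpace ℝ (Fin 3) :=
  ![bCtr, cubeVertex A, cubeVertex (A ∆ {σ 2}), cubeVertex (A ∆ {σ 1, σ 2})]

/-- The tetrahedron cut off by its center from the Kuhn tetrahedron that is spanned by the edge path
from the corner `A` to the opposite corner in directions `σ 2`, `σ 1`, `σ 0`. -/
def halfKuhnTet : Set (EuclideanSpace ℝ (Fin 3)) :=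
  convexHull ℝ (range (halfKuhnVertex A σ))

/-- The barycentric coordinates of `x` with respect to `halfKuhnVertex A σ`. -/
def halfKuhnCoord : Fin 4 → EuclideanSpace ℝ (Fin 3) → ℝ :=
  ![fun x => 2 * cornerCoord A x (σ 0),
    fun x => 1 - cornerCoord A x (σ 0) - cornerCoord A x (σ 2),
    fun x => cornerCoord A x (σ 2) - cornerCoord A x (σ 1),
    fun x => cornerCoord A x (σ 1) - cornerCoord A x (σ 0)]

theorem cornerCoord_bCtr (i : Fin 3) : cornerCoord A bCtr i = 1 / 2 := by
  have hb : bCtr i = 1 / 2 := by fin_cases i <;> rfl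
  by_cases hA : i ∈ A <;> norm_num [cornerCoord, hA, hb]

theorem isBarycentricCoordinates_halfKuhnCoord :
    IsBarycentricCoordinates (halfKuhnVertex A σ) (halfKuhnCoord A σ) := by
  intro x
  have hsum : ∑ k, halfKuhnCoord A σ k x = 1 := by
    simp only [halfKuhnCoord, Fin.sum_univ_four, Matrix.cons_val]
    ring
  refine ⟨hsum, cornerCoord_injective A (funext fun j => ?_)⟩
  obtain ⟨i, rfl⟩ := σ.surjective j
  rw [cornerCoord_sum_smul A _ hsum]
  simp only [halfKuhnCoord, halfKuhnVertex, Fin.sum_univ_four,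
    Matrix.cons_val, cornerCoord_bCtr, cornerCoord_cubeVertex_self, cornerCoord_cubeVertex_symmDiff,
    Finset.mem_insert, Finset.mem_singleton, σ.injective.eq_iff]
  fin_cases i <;> simp <;> ring

theorem affineSpan_halfKuhnTet : affineSpan ℝ (halfKuhnTet A σ) = ⊤ := by
  rw [halfKuhnTet, affineSpan_convexHull]
  exact (isBarycentricCoordinates_halfKuhnCoord A σ).affineSpan_range_eq_top

variable {A σ} {x : EuclideanSpace ℝ (Fin 3)}

theorem mem_halfKuhnTet : x ∈ halfKuhnTet A σ ↔ IsHalfKuhn (cornerCoord A x ∘ σ) := by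
  rw [halfKuhnTet, (isBarycentricCoordinates_halfKuhnCoord A σ).convexHull_range_eq (by simp),
    isHalfKuhn_fin_three_iff]
  simp [halfKuhnCoord, Fin.forall_fin_succ, le_sub_iff_add_le']

theorem mem_interior_halfKuhnTet :
    x ∈ interior (halfKuhnTet A σ) ↔ IsStrictHalfKuhn (cornerCoord A x ∘ σ) := by
  rw [halfKuhnTet,
    (isBarycentricCoordinates_halfKuhnCoord A σ).interior_convexHull_range_eq (by simp),
    isStrictHalfKuhn_fin_three_iff]
  simp [halfKuhnCoord, Fin.forall_fin_succ, lt_sub_iff_add_lt']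

theorem mem_unitCube_iff_cornerCoord (A : Finset (Fin 3)) :
    x ∈ unitCube ↔ ∀ i, cornerCoord A x i ∈ Icc 0 1 :=
  forall_congr' fun i => (cornerCoord_mem_Icc_iff A x i).symm

theorem halfKuhnTet_subset_unitCube : halfKuhnTet A σ ⊆ unitCube := fun x hx =>
  (mem_unitCube_iff_cornerCoord A).2 fun i => by
    simpa using (mem_halfKuhnTet.1 hx).mem_Icc (σ.symm i)

theorem exists_mem_halfKuhnTet (A : Finset (Fin 3)) (hx : x ∈ unitCube) :
    ∃ σ, x ∈ halfKuhnTet A σ ∨ x ∈ halfKuhnTet Aᶜ σ := by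
  simp only [mem_halfKuhnTet, cornerCoord_compl]
  exact exists_perm_isHalfKuhn ((mem_unitCube_iff_cornerCoord A).1 hx)

theorem eq_of_mem_interior_halfKuhnTet {B : Finset (Fin 3)} {τ : Equiv.Perm (Fin 3)}
    (hB : B = A ∨ B = Aᶜ) (hA : x ∈ interior (halfKuhnTet A σ))
    (hx : x ∈ interior (halfKuhnTet B τ)) : (A, σ) = (B, τ) := by
  rw [mem_interior_halfKuhnTet] at hA hx
  rcases hB with rfl | rfl
  · rw [perm_eq_of_strictMono_comp hA.1 hx.1]
  · rw [cornerCoord_compl] at hx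
    exact absurd hx hA.not_one_sub

end HalfKuhnTetrahedra

section TypeE

open Equiv
open scoped symmDiff

/-- The boundary triangle opposite to the center in `halfKuhnTet A σ`, as a set of cube vertices. -/
def cornerTriangle (A : Finset (Fin 3)) (σ : Perm (Fin 3)) : Finset (Finset (Fin 3)) :=
  {A, A ∆ {σ 2}, A ∆ {σ 1, σ 2}}

theorem halfKuhnTet_eq_convexHull_insert (A : Finset (Fin 3)) (σ : Perm (Fin 3)) :
    halfKuhnTet A σ = convexHull ℝ (insert bCtr (cubeVertex '' cornerTriangle A σ)) := by
  simp only [halfKuhnTet, halfKuhnVertex, cornerTriangle, Matrix.range_cons, Matrix.range_empty,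
    Finset.coe_insert, Finset.coe_singleton, image_insert_eq, image_singleton, singleton_union,
    union_empty]

/-- The corner and the permutation that present the tetrahedron `typeE k` as a `halfKuhnTet`.
All diagonals of the type E triangulation of the boundary issue from `a₃`, the corner `{0, 1}`, or
from the opposite `a₄`, the corner `{2}`. -/
def typeEIndex : Fin 12 → Finset (Fin 3) × Perm (Fin 3) :=
  ![({0, 1}, (finRotate 3)⁻¹), ({0, 1}, swap 0 2), ({2}, swap 0 1), ({2}, 1),
    ({0, 1}, swap 1 2), ({2}, finRotate 3), ({0, 1}, finRotate 3), ({2}, swap 1 2),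
    ({0, 1}, 1), ({0, 1}, swap 0 1), ({2}, swap 0 2), ({2}, (finRotate 3)⁻¹)]

theorem typeEIndex_injective : Function.Injective typeEIndex := by decide

theorem typeEIndex_fst_eq_or_eq_compl (k l : Fin 12) :
    (typeEIndex l).1 = (typeEIndex k).1 ∨ (typeEIndex l).1 = (typeEIndex k).1ᶜ := by
  revert k l
  decide

theorem exists_typeEIndex_eq (σ : Perm (Fin 3)) :
    (∃ k, typeEIndex k = ({2}, σ)) ∧ ∃ k, typeEIndex k = ({2}ᶜ, σ) := by
  revert σ
  decide

/-- The vertex sets of the twelve boundary triangles over which the `typeE k` are coned, each vertex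
given by the set of its coordinates equal to `1`. -/
def typeETriangle : Fin 12 → Finset (Finset (Fin 3)) :=
  ![{∅, {0}, {0, 1}}, {∅, {1}, {0, 1}}, {∅, {0}, {2}}, {∅, {1}, {2}},
    {{0}, {0, 1}, {0, 2}}, {{0}, {2}, {0, 2}}, {{1}, {0, 1}, {1, 2}}, {{1}, {2}, {1, 2}},
    {{0, 1}, {0, 2}, {0, 1, 2}}, {{0, 1}, {1, 2}, {0, 1, 2}},
    {{2}, {0, 2}, {0, 1, 2}}, {{2}, {1, 2}, {0, 1, 2}}]

theorem typeETriangle_eq (k : Fin 12) :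
    typeETriangle k = cornerTriangle (typeEIndex k).1 (typeEIndex k).2 := by
  revert k
  decide

theorem cubeVertex_eq_pt3 (J : Finset (Fin 3)) :
    cubeVertex J =
      pt3 (if 0 ∈ J then 1 else 0) (if 1 ∈ J then 1 else 0) (if 2 ∈ J then 1 else 0) := by
  ext i
  fin_cases i <;> rfl

theorem typeE_eq_convexHull (k : Fin 12) :
    typeE k = convexHull ℝ (insert bCtr (cubeVertex '' typeETriangle k)) := by
  fin_cases k <;>
    simp [typeE, typeETriangle, tet, image_insert_eq, cubeVertex_eq_pt3,
      a₀, a₁, a₂, a₃, a₄, a₅, a₆, a₇]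

theorem typeE_eq_halfKuhnTet (k : Fin 12) :
    typeE k = halfKuhnTet (typeEIndex k).1 (typeEIndex k).2 := by
  rw [typeE_eq_convexHull, typeETriangle_eq, halfKuhnTet_eq_convexHull_insert]

theorem affineIndependent_of_affineSpan_tet_eq_top {p q r s : EuclideanSpace ℝ (Fin 3)}
    (h : affineSpan ℝ (tet p q r s) = ⊤) : AffineIndependent ℝ ![p, q, r, s] := by
  refine affineIndependent_of_affineSpan_eq_top ?_ (by simp)
  simpa only [tet, affineSpan_convexHull, Matrix.range_cons, Matrix.range_empty, singleton_union,
    union_empty] using h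

theorem affineSpan_typeE (k : Fin 12) : affineSpan ℝ (typeE k) = ⊤ := by
  rw [typeE_eq_halfKuhnTet, affineSpan_halfKuhnTet]

theorem iUnion_typeE : ⋃ k, typeE k = unitCube := by
  simp only [typeE_eq_halfKuhnTet]
  refine Subset.antisymm (iUnion_subset fun k => halfKuhnTet_subset_unitCube) fun x hx => ?_
  obtain ⟨σ, hσ⟩ := exists_mem_halfKuhnTet {2} hx
  obtain ⟨⟨k, hk⟩, ⟨l, hl⟩⟩ := exists_typeEIndex_eq σ
  rcases hσ with hσ | hσ
  · exact mem_iUnion.2 ⟨k, by rwa [hk]⟩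
  · exact mem_iUnion.2 ⟨l, by rwa [hl]⟩

theorem interior_typeE_inter_interior_typeE {k l : Fin 12} (hkl : k ≠ l) :
    interior (typeE k) ∩ interior (typeE l) = ∅ := by
  simp only [typeE_eq_halfKuhnTet]
  refine eq_empty_of_forall_notMem fun x hx => hkl (typeEIndex_injective ?_)
  exact eq_of_mem_interior_halfKuhnTet (typeEIndex_fst_eq_or_eq_compl k l) hx.1 hx.2

end TypeE

/-- The twelve tetrahedra of the 'type E' triangulation of the unit cube,
`ba₀a₁a₃, ba₀a₂a₃, ba₀a₁a₄, ba₀a₂a₄, ba₁a₃a₅, ba₁a₄a₅, ba₂a₃a₆, ba₂a₄a₆, ba₃a₅a₇,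
ba₃a₆a₇, ba₄a₅a₇, ba₄a₆a₇` (where `b = (1/2,1/2,1/2)` is the center), each have affinely
independent vertex sets, their union is `[0,1]³`, and they have pairwise disjoint
interiors. -/
theorem typeE_decomposition_of_cube :
    AffineIndependent ℝ ![bCtr, a₀, a₁, a₃] ∧ AffineIndependent ℝ ![bCtr, a₀, a₂, a₃] ∧
    AffineIndependent ℝ ![bCtr, a₀, a₁, a₄] ∧ AffineIndependent ℝ ![bCtr, a₀, a₂, a₄] ∧
    AffineIndependent ℝ ![bCtr, a₁, a₃, a₅] ∧ AffineIndependent ℝ ![bCtr, a₁, a₄, a₅] ∧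
    AffineIndependent ℝ ![bCtr, a₂, a₃, a₆] ∧ AffineIndependent ℝ ![bCtr, a₂, a₄, a₆] ∧
    AffineIndependent ℝ ![bCtr, a₃, a₅, a₇] ∧ AffineIndependent ℝ ![bCtr, a₃, a₆, a₇] ∧
    AffineIndependent ℝ ![bCtr, a₄, a₅, a₇] ∧ AffineIndependent ℝ ![bCtr, a₄, a₆, a₇] ∧
    (⋃ k, typeE k) = unitCube ∧
    (∀ k l : Fin 12, k ≠ l → interior (typeE k) ∩ interior (typeE l) = ∅) := by
  have hindep {p q r s : EuclideanSpace ℝ (Fin 3)} (k : Fin 12) (hk : typeE k = tet p q r s) :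
      AffineIndependent ℝ ![p, q, r, s] :=
    affineIndependent_of_affineSpan_tet_eq_top (hk ▸ affineSpan_typeE k)
  exact ⟨hindep 0 rfl, hindep 1 rfl, hindep 2 rfl, hindep 3 rfl, hindep 4 rfl, hindep 5 rfl,
    hindep 6 rfl, hindep 7 rfl, hindep 8 rfl, hindep 9 rfl, hindep 10 rfl, hindep 11 rfl,
    iUnion_typeE, fun k l => interior_typeE_inter_interior_typeE⟩
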